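/- Let a > 0 and let z : ℝ³ → ℝ³ be continuously differentiable on a neighborhood of the sphere ∂B_a = {x ∈ ℝ³ : |x| = a}. Then ∫_{∂B_a} ( div z(x) − (∇z(x) ν(x)) · ν(x) ) dH²(x) = (2/a) ∫_{∂B_a} z(x) · ν(x) dH²(x), where ν(x) = x/a is the outward unit normal, div z = tr ∇z, and ∇z is the Jacobian matrix. -/

import Mathlib

open Matrix MeasureTheory

/-- The Jacobian matrix `(∇z)_{ij} = ∂z_i/∂x_j` of a map `z : ℝ³ → ℝ³`. -/
noncomputable def jacE (z : EuclideanSpace ℝ (Fin 3) → EuclideanSpace ℝ (Fin 3))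
    (x : EuclideanSpace ℝ (Fin 3)) : Matrix (Fin 3) (Fin 3) ℝ :=
  fun i j => fderiv ℝ z x (EuclideanSpace.single j 1) i

lemma sphere_fin (a : ℝ) (ha : 0 < a) : μH[2] (Metric.sphere (0 : EuclideanSpace ℝ (Fin 3)) a) < ⊤ := by
  let F : (Fin 2 → ℝ) → EuclideanSpace ℝ (Fin 3) := fun p => !₂[a * Real.sin (p 0) * Real.cos (p 1), a * Real.sin (p 0) * Real.sin (p 1), a * Real.cos (p 0)]
  let K : Set (Fin 2 → ℝ) := Metric.closedBall 0 10
  have hF : ContDiff ℝ 1 F := by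
    rw [contDiff_euclidean]
    intro i
    fin_cases i <;> simp [F] <;> fun_prop
  obtain ⟨C, hC⟩ := hF.contDiffOn (s := K) |>.exists_lipschitzOnWith one_ne_zero (convex_closedBall _ _) (isCompact_closedBall _ _)
  have hsub : Metric.sphere (0 : EuclideanSpace ℝ (Fin 3)) a ⊆ Set.image F K := by
    intro x hx
    have hn : x 0 ^ 2 + x 1 ^ 2 + x 2 ^ 2 = a ^ 2 := by
      have : ‖x‖ = a := by simpa using hx
      rw [← this, EuclideanSpace.norm_sq_eq, Fin.sum_univ_three]; simp
    let w : ℂ := ⟨x 0, x 1⟩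
    have h2 : |x 2| ≤ a := abs_le_of_sq_le_sq (by nlinarith [sq_nonneg (x 0), sq_nonneg (x 1)]) ha.le
    have h3 := abs_le.1 h2
    have hw : ‖w‖ = a * Real.sin (Real.arccos (x 2 / a)) := by
      rw [Real.sin_arccos, Complex.norm_eq_sqrt_sq_add_sq]
      rw [← Real.sqrt_sq ha.le, ← Real.sqrt_mul (sq_nonneg a), Real.sqrt_sq ha.le]
      congr 1
      field_simp
      simp [w]; linarith
    have hpi := Real.pi_lt_d2
    refine ⟨![Real.arccos (x 2 / a), w.arg], ?_, ?_⟩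
    · simp only [K, mem_closedBall_zero_iff]
      rw [pi_norm_le_iff_of_nonneg (by norm_num)]
      intro i
      fin_cases i
      · have := Real.arccos_nonneg (x 2 / a)
        have := Real.arccos_le_pi (x 2 / a)
        simp [abs_le]; constructor <;> linarith
      · have := Complex.abs_arg_le_pi w
        simp; linarith
    · ext i
      fin_cases i
      · simp [F, ← hw, Complex.norm_mul_cos_arg, w]
      · simp [F, ← hw, Complex.norm_mul_sin_arg, w]
      · simp only [F]
        simp
        rw [Real.cos_arccos]
        · field_simp
        · rw [le_div_iff₀ ha]; linarith
        · rw [div_le_iff₀ ha]; linarith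
  refine (measure_mono hsub).trans_lt ((hC.hausdorffMeasure_image_le (by norm_num)).trans_lt ?_)
  have : (μH[2] : Measure (Fin 2 → ℝ)) = volume := by
    have := hausdorffMeasure_pi_real (ι := Fin 2)
    simpa using this
  rw [this]
  exact ENNReal.mul_lt_top (by simp) (isCompact_closedBall _ _).measure_lt_top

/-- rotation -/
lemma int_skew (a : ℝ) (ha : 0 < a) (U : Set (EuclideanSpace ℝ (Fin 3))) (hU : IsOpen U)
    (hsub : Metric.sphere (0 : EuclideanSpace ℝ (Fin 3)) a ⊆ U) (f : EuclideanSpace ℝ (Fin 3) → ℝ) (hf : ContDiffOn ℝ 1 f U)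
    (A : EuclideanSpace ℝ (Fin 3) →L[ℝ] EuclideanSpace ℝ (Fin 3)) (hA : ∀ x y, inner ℝ (A x) y = - inner ℝ x (A y))
    (hA3 : ∀ x, A (A (A x)) = - A x) :
    IntegrableOn (fun x => fderiv ℝ f x (A x)) (Metric.sphere (0 : EuclideanSpace ℝ (Fin 3)) a) μH[2] ∧
    ∫ x in Metric.sphere (0 : EuclideanSpace ℝ (Fin 3)) a, fderiv ℝ f x (A x) ∂μH[2] = 0 := by
  set S := Metric.sphere (0 : EuclideanSpace ℝ (Fin 3)) a with hS
  set σ : Measure (EuclideanSpace ℝ (Fin 3)) := (μH[2] : Measure (EuclideanSpace ℝ (Fin 3))).restrict S with hσ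
  have hSm : MeasurableSet S := Metric.isClosed_sphere.measurableSet
  have hSc : IsCompact S := isCompact_sphere _ _
  have : IsFiniteMeasure σ := ⟨by rw [hσ, Measure.restrict_apply_univ]; exact sphere_fin a ha⟩
  have hcont : ContinuousOn (fun x => fderiv ℝ f x (A x)) S := by
    have := (hf.continuousOn_fderiv_of_isOpen hU le_rfl).mono hsub
    exact this.clm_apply A.continuous.continuousOn
  have key : ∀ {g : EuclideanSpace ℝ (Fin 3) → ℝ}, ContinuousOn g S → IntegrableOn g S μH[2] := by
    intro g hg
    obtain ⟨C, hC⟩ := hSc.exists_bound_of_continuousOn hg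
    exact Integrable.of_bound (μ := σ) (hg.aestronglyMeasurable hSm) C
      ((ae_restrict_mem hSm).mono hC)
  refine ⟨key hcont, ?_⟩
  have hx0 : ∀ x, inner ℝ x (A x) = 0 := by
    intro x
    have := hA x x
    rw [real_inner_comm] at this; linarith
  let Rl : ℝ → EuclideanSpace ℝ (Fin 3) →L[ℝ] EuclideanSpace ℝ (Fin 3) := fun t =>
    ContinuousLinearMap.id ℝ (EuclideanSpace ℝ (Fin 3)) + Real.sin t • A + (1 - Real.cos t) • (A.comp A)
  have Rl_apply : ∀ t x, Rl t x = x + Real.sin t • A x + (1 - Real.cos t) • A (A x) := by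
    intro t x; simp [Rl]
  have hnorm : ∀ t x, ‖Rl t x‖ = ‖x‖ := by
    intro t x
    have h1 := hx0 x
    have h2 : inner ℝ x (A (A x)) = - ‖A x‖ ^ 2 := by
      rw [← real_inner_self_eq_norm_sq, hA]; simp
    have h3 := hx0 (A x)
    have h4 : ‖A (A x)‖ ^ 2 = ‖A x‖ ^ 2 := by
      rw [← real_inner_self_eq_norm_sq, hA, hA3]; simp
    have : ‖Rl t x‖ ^ 2 = ‖x‖ ^ 2 := by
      rw [Rl_apply, norm_add_sq_real, norm_add_sq_real, inner_add_left]
      simp only [inner_smul_left, inner_smul_right, norm_smul, mul_pow, h1, h2, h3, h4, Real.norm_eq_abs, sq_abs]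
      simp
      linear_combination ‖A x‖ ^ 2 * Real.sin_sq_add_cos_sq t
    exact (sq_eq_sq₀ (norm_nonneg _) (norm_nonneg _)).1 this
  let R : ℝ → EuclideanSpace ℝ (Fin 3) ≃ₗᵢ[ℝ] EuclideanSpace ℝ (Fin 3) := fun t =>
    LinearIsometry.toLinearIsometryEquiv ⟨(Rl t : EuclideanSpace ℝ (Fin 3) →ₗ[ℝ] EuclideanSpace ℝ (Fin 3)), hnorm t⟩ rfl
  have hR : ∀ t x, R t x = Rl t x := fun t x => rfl
  have hRS : ∀ t x, x ∈ S → R t x ∈ S := by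
    intro t x hx
    simpa [hS] using hx
  have hmp : ∀ t, MeasurePreserving (R t) σ σ := by
    intro t
    have h := (R t).toIsometryEquiv.measurePreserving_hausdorffMeasure 2
    have h2 := h.restrict_preimage hSm
    have h3 : Set.preimage (R t).toIsometryEquiv S = S := by
      ext x; simp [hS]
    rw [h3] at h2
    exact h2
  have hinv : ∀ t, ∫ x, f (R t x) ∂σ = ∫ x, f x ∂σ := fun t =>
    (hmp t).integral_comp (R t).toHomeomorph.measurableEmbedding f
  obtain ⟨C, hC⟩ := hSc.exists_bound_of_continuousOn hcont
  have hd : ∀ x ∈ S, ∀ t, HasDerivAt (fun t => f (R t x)) (fderiv ℝ f (R t x) (A (R t x))) t := by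
    intro x hx t
    have h1 : HasDerivAt (fun t => R t x) (A (R t x)) t := by
      have e : A (R t x) = Real.cos t • A x + Real.sin t • A (A x) := by
        rw [hR, Rl_apply]; simp only [map_add, map_smul, hA3]; module
      rw [e]
      have e2 : (fun t => R t x) = fun t => x + Real.sin t • A x + (1 - Real.cos t) • A (A x) := by
        funext t; rw [hR, Rl_apply]
      rw [e2]
      have := ((Real.hasDerivAt_sin t).smul_const (A x)).const_add x |>.add
        (((Real.hasDerivAt_cos t).const_sub 1).smul_const (A (A x)))
      rw [neg_neg] at this
      exact this
    have hm := hsub (hRS t x hx)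
    have h2 : DifferentiableAt ℝ f (R t x) :=
      (hf.contDiffAt (hU.mem_nhds hm)).differentiableAt one_ne_zero
    exact h2.hasFDerivAt.comp_hasDerivAt t h1
  have hR0 : ∀ x, R 0 x = x := by intro x; rw [hR, Rl_apply]; simp
  have hcf : ContinuousOn f S := hf.continuousOn.mono hsub
  have hcr : ∀ t, ContinuousOn (fun x => f (R t x)) S := fun t =>
    hcf.comp (R t).continuous.continuousOn (hRS t)
  have hmain := hasDerivAt_integral_of_dominated_loc_of_deriv_le (μ := σ) (𝕜 := ℝ)
    (F := fun t x => f (R t x)) (F' := fun t x => fderiv ℝ f (R t x) (A (R t x))) (x₀ := (0:ℝ))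
    (s := Set.univ) (bound := fun _ => C) Filter.univ_mem
    (Filter.Eventually.of_forall fun t => (hcr t).aestronglyMeasurable hSm)
    (key (hcr 0))
    (by simp only [hR0]; exact hcont.aestronglyMeasurable hSm)
    ((ae_restrict_mem hSm).mono fun x hx t _ => hC _ (hRS t x hx))
    (integrable_const C)
    ((ae_restrict_mem hSm).mono fun x hx t _ => hd x hx t)
  have h := hmain.2
  simp only [hinv, hR0] at h
  exact h.unique (hasDerivAt_const _ _)

/-- The generator of rotations in the `(i, j)` plane. -/
noncomputable def rotGen (i j : Fin 3) : EuclideanSpace ℝ (Fin 3) →L[ℝ] EuclideanSpace ℝ (Fin 3) :=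
  (EuclideanSpace.proj j : EuclideanSpace ℝ (Fin 3) →L[ℝ] ℝ).smulRight (EuclideanSpace.single i 1)
  - (EuclideanSpace.proj i : EuclideanSpace ℝ (Fin 3) →L[ℝ] ℝ).smulRight (EuclideanSpace.single j 1)

lemma rotGen_apply (i j : Fin 3) (x : EuclideanSpace ℝ (Fin 3)) :
    rotGen i j x = x j • EuclideanSpace.single i (1 : ℝ) - x i • EuclideanSpace.single j (1 : ℝ) := by
  simp [rotGen]

lemma rotGen_skew (i j : Fin 3) (x y : EuclideanSpace ℝ (Fin 3)) :
    inner ℝ (rotGen i j x) y = - inner ℝ x (rotGen i j y) := by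
  simp only [rotGen_apply, inner_sub_left, inner_sub_right, inner_smul_left, inner_smul_right,
    EuclideanSpace.inner_single_left, EuclideanSpace.inner_single_right]
  simp
  ring

lemma rotGen_cube (i j : Fin 3) (x : EuclideanSpace ℝ (Fin 3)) :
    rotGen i j (rotGen i j (rotGen i j x)) = - rotGen i j x := by
  by_cases h : i = j
  · subst h; simp [rotGen_apply]
  · have hji : j ≠ i := fun e => h e.symm
    simp [rotGen_apply, h, hji]
    module

/-- Surface divergence theorem on the sphere `∂B_a`:
`∫_{∂B_a} div_τ z dH² = (2/a) ∫_{∂B_a} z·ν dH²`, where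
`div_τ z = div z − (∇z ν)·ν` and `ν(x) = x/a`. -/
theorem surface_divergence_theorem_sphere
    (a : ℝ) (ha : 0 < a)
    (U : Set (EuclideanSpace ℝ (Fin 3))) (hU : IsOpen U)
    (hsub : Metric.sphere (0 : EuclideanSpace ℝ (Fin 3)) a ⊆ U)
    (z : EuclideanSpace ℝ (Fin 3) → EuclideanSpace ℝ (Fin 3))
    (hz : ContDiffOn ℝ 1 z U) :
    ∫ x in Metric.sphere (0 : EuclideanSpace ℝ (Fin 3)) a,
        (Matrix.trace (jacE z x)
          - ((jacE z x).mulVec (fun j => x j / a)) ⬝ᵥ (fun j => x j / a)) ∂(μH[2])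
      = 2/a * ∫ x in Metric.sphere (0 : EuclideanSpace ℝ (Fin 3)) a,
          ((fun i => z x i) ⬝ᵥ (fun j => x j / a)) ∂(μH[2]) := by
  set S := Metric.sphere (0 : EuclideanSpace ℝ (Fin 3)) a with hS
  have hSm : MeasurableSet S := Metric.isClosed_sphere.measurableSet
  have hzi : ∀ i, ContDiffOn ℝ 1 (fun x => z x i) U := fun i => contDiffOn_euclidean.1 hz i
  have hf : ∀ i j : Fin 3, ContDiffOn ℝ 1 (fun x => x j * z x i) U := by
    intro i j
    have : ContDiff ℝ 1 (fun x : EuclideanSpace ℝ (Fin 3) => x j) := by fun_prop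
    exact this.contDiffOn.mul (hzi i)
  have H := fun i j => int_skew a ha U hU hsub _ (hf i j) (rotGen i j) (rotGen_skew i j)
    (rotGen_cube i j)
  have hzint : IntegrableOn (fun x => (fun i => z x i) ⬝ᵥ (fun j => x j / a)) S μH[2] := by
    have hc : ContinuousOn (fun x => (fun i => z x i) ⬝ᵥ (fun j => x j / a)) S := by
      simp only [dotProduct]
      refine continuousOn_finsetSum _ fun i _ => ((hzi i).continuousOn.mono hsub).mul ?_
      fun_prop
    obtain ⟨C, hC⟩ := (isCompact_sphere _ _).exists_bound_of_continuousOn hc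
    have : IsFiniteMeasure ((μH[2] : Measure (EuclideanSpace ℝ (Fin 3))).restrict S) :=
      ⟨by rw [Measure.restrict_apply_univ]; exact sphere_fin a ha⟩
    exact Integrable.of_bound (hc.aestronglyMeasurable hSm) C ((ae_restrict_mem hSm).mono hC)
  have hpt : ∀ x ∈ S, Matrix.trace (jacE z x)
          - ((jacE z x).mulVec (fun j => x j / a)) ⬝ᵥ (fun j => x j / a)
      = (1 / a ^ 2) * (∑ i, ∑ j, fderiv ℝ (fun x => x j * z x i) x (rotGen i j x))
        + 2 / a * ((fun i => z x i) ⬝ᵥ (fun j => x j / a)) := by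
    intro x hx
    have hn : x 0 ^ 2 + x 1 ^ 2 + x 2 ^ 2 = a ^ 2 := by
      have : ‖x‖ = a := by simpa [hS] using hx
      rw [← this, EuclideanSpace.norm_sq_eq, Fin.sum_univ_three]; simp
    have hzd : DifferentiableAt ℝ z x :=
      (hz.contDiffAt (hU.mem_nhds (hsub hx))).differentiableAt one_ne_zero
    have hD : ∀ i j, fderiv ℝ (fun x => x j * z x i) x (rotGen i j x)
        = (rotGen i j x) j * z x i + x j * (x j * jacE z x i i - x i * jacE z x i j) := by
      intro i j
      have h1 : HasFDerivAt (fun x : EuclideanSpace ℝ (Fin 3) => x j)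
          (EuclideanSpace.proj j : EuclideanSpace ℝ (Fin 3) →L[ℝ] ℝ) x :=
        (EuclideanSpace.proj j : EuclideanSpace ℝ (Fin 3) →L[ℝ] ℝ).hasFDerivAt
      have h2 : HasFDerivAt (fun x : EuclideanSpace ℝ (Fin 3) => z x i)
          ((EuclideanSpace.proj i : EuclideanSpace ℝ (Fin 3) →L[ℝ] ℝ).comp (fderiv ℝ z x)) x :=
        (EuclideanSpace.proj i : EuclideanSpace ℝ (Fin 3) →L[ℝ] ℝ).hasFDerivAt.comp x
          hzd.hasFDerivAt
      rw [(h1.fun_mul h2).fderiv]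
      have h3 : (fderiv ℝ z x (rotGen i j x)) i = x j * jacE z x i i - x i * jacE z x i j := by
        rw [rotGen_apply]; simp [jacE]
      simp [h3]
      ring
    simp only [hD]
    simp only [Matrix.trace, Matrix.mulVec, dotProduct, Fin.sum_univ_three, Matrix.diag,
      rotGen_apply]
    simp
    field_simp
    linear_combination (-(jacE z x 0 0 + jacE z x 1 1 + jacE z x 2 2)) * hn
  rw [setIntegral_congr_fun hSm hpt, integral_add, integral_const_mul, integral_const_mul,
    integral_finsetSum]
  · have : ∀ i, ∫ x in S, ∑ j, fderiv ℝ (fun x => x j * z x i) x (rotGen i j x) ∂μH[2] = 0 := by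
      intro i
      rw [integral_finsetSum _ fun j _ => (H i j).1]
      exact Finset.sum_eq_zero fun j _ => (H i j).2
    simp [this]
  · exact fun i _ => integrable_finsetSum _ fun j _ => (H i j).1
  · exact (integrable_finsetSum _ fun i _ => integrable_finsetSum _ fun j _ => (H i j).1).const_mul _
  · exact Integrable.const_mul hzint _
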